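/- arXiv:1311.2171 — 3 statements merged into one kernel-verified Lean document; each statement's English description precedes it below -/
import Mathlib

section
/- Let H and H̃ be complex Hilbert spaces, Ω ⊆ ℂ open, k ≥ 1, and let σ : Ω → H and σ̃ : Ω → H̃ be holomorphic and (k+1)-nondegenerate, with jet Gram matrices G_m and G̃_m respectively. Then the following are equivalent: (1) for every z₀ ∈ Ω there exist an open neighborhood U ⊆ Ω of z₀ and holomorphic nowhere-vanishing functions ψ, ψ′ : U → ℂ with |ψ(z)|²·det G̃_k(z) = det G_k(z) and |ψ′(z)|²·det G̃_{k+1}(z) = det G_{k+1}(z) for all z ∈ U (local equivalence of det J_k and of det J_{k+1} of the two line bundles); (2) for every z₀ ∈ Ω there exist an open neighborhood U ⊆ Ω of z₀ and a holomorphic nowhere-vanishing function φ : U → ℂ with |φ(z)|²·⟨σ̃(z),σ̃(z)⟩ = ⟨σ(z),σ(z)⟩ for all z ∈ U (local equivalence of the line bundles). -/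
/-!
Write `Dₙ` for the `n × n` jet Gram determinant of `σ`. Differentiating a Gram determinant of
consecutive derivatives only moves its last row or column, so the Desnanot–Jacobi identity gives
the Toda equation `Dₙ₊₁² ∂∂̄ log Dₙ₊₁ = Dₙ₊₂ Dₙ`. The operator `f ↦ f² ∂∂̄ log f` turns a factor
`|ψ|²` with `ψ` holomorphic into `|ψ|⁴ = |ψ²|²`. Hence an equivalence at level `n + 1` makes the
products `Dₙ₊₂ Dₙ` equivalent, and then the equivalences at levels `n` and `n + 2` imply each
other. As `D₀ = 1`, induction shows that equivalence at two consecutive levels is the same as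
equivalence at levels `0` and `1`, that is, of the metrics `D₁ = ⟨σ, σ⟩`.
-/

open Matrix

noncomputable section

variable {H : Type*} [NormedAddCommGroup H] [InnerProductSpace ℂ H] [CompleteSpace H]

/-- `⟪x, y⟫` is the Mathlib inner product (conjugate-linear in the first argument);
it equals the paper's inner product `⟨y, x⟩`, which is linear in the first argument. -/
local notation "⟪" x ", " y "⟫" => (inner ℂ x y : ℂ)

/-- `lG σ N z` is the `N×N` Gram matrix of `σ(z), σ′(z), …, σ^{(N−1)}(z)`; its `(i,j)` entry is
`⟪σ^{(i)}(z), σ^{(j)}(z)⟫ = ⟨σ^{(j)}(z), σ^{(i)}(z)⟩_paper`.  The jet Gram matrix `G_k` of the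
paper is `lG σ (k+1)`. -/
def lG (σ : ℂ → H) (N : ℕ) (z : ℂ) : Matrix (Fin N) (Fin N) ℂ :=
  Matrix.of fun i j => ⟪iteratedDeriv (i : ℕ) σ z, iteratedDeriv (j : ℕ) σ z⟫

variable {H' : Type*} [NormedAddCommGroup H'] [InnerProductSpace ℂ H'] [CompleteSpace H']

open Filter Topology ComplexConjugate

section Determinants

variable {R : Type*} [CommRing R]

theorem sum_det_updateRow_eq_sum_det_updateCol {ι : Type*} [Fintype ι] [DecidableEq ι]
    (A B : Matrix ι ι R) :
    ∑ i, (A.updateRow i (B.row i)).det = ∑ j, (A.updateCol j (B.col j)).det := by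
  have cols (A B : Matrix ι ι R) :
      ∑ j, (A.updateCol j (B.col j)).det = (A.adjugate * B).trace := by
    simp_rw [← cramer_apply, cramer_eq_adjugate_mulVec]
    rfl
  have rows : ∑ i, (A.updateRow i (B.row i)).det = ∑ i, (Aᵀ.updateCol i (Bᵀ.col i)).det := by
    simp_rw [← det_transpose (A.updateRow _ _), ← updateCol_transpose]
    rfl
  rw [rows, cols, cols, ← adjugate_transpose, ← transpose_mul, trace_transpose, trace_mul_comm]

theorem det_submatrix_append {α β : Type*} (A : Matrix α β R) {n m : ℕ} (r : Fin n → α)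
    (c : Fin n → β) (hA : IsUnit (A.submatrix r c).det) (r' : Fin m → α) (c' : Fin m → β) :
    (A.submatrix (Fin.append r r') (Fin.append c c')).det =
      (A.submatrix r c).det *
        ((A - A.submatrix id c * (A.submatrix r c)⁻¹ * A.submatrix r id).submatrix r' c').det := by
  let := (A.submatrix r c).invertibleOfIsUnitDet hA
  have blocks : (A.submatrix (Fin.append r r') (Fin.append c c')).submatrix
      finSumFinEquiv finSumFinEquiv =
      fromBlocks (A.submatrix r c) (A.submatrix r c') (A.submatrix r' c) (A.submatrix r' c') := by
    ext (a | a) (b | b) <;> simp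
  rw [← det_submatrix_equiv_self finSumFinEquiv, blocks, det_fromBlocks₁₁, invOf_eq_nonsing_inv]
  rfl

/-- The Desnanot–Jacobi identity, obtained from `2 × 2` minors of a Schur complement. -/
theorem det_submatrix_append_pair_mul_det {α β : Type*} (A : Matrix α β R) {n : ℕ}
    (r : Fin n → α) (c : Fin n → β) (hA : IsUnit (A.submatrix r c).det) (i i' : α) (j j' : β) :
    (A.submatrix (Fin.append r ![i, i']) (Fin.append c ![j, j'])).det * (A.submatrix r c).det =
      (A.submatrix (Fin.append r ![i]) (Fin.append c ![j])).det *
          (A.submatrix (Fin.append r ![i']) (Fin.append c ![j'])).det -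
        (A.submatrix (Fin.append r ![i]) (Fin.append c ![j'])).det *
          (A.submatrix (Fin.append r ![i']) (Fin.append c ![j])).det := by
  simp only [det_submatrix_append A r c hA, det_fin_two, det_fin_one, submatrix_apply,
    cons_val_zero, cons_val_one]
  ring

theorem append_val_natAdd (n m : ℕ) :
    Fin.append (Fin.val : Fin n → ℕ) (fun a : Fin m => n + a) = Fin.val :=
  Fin.append_castAdd_natAdd (f := Fin.val)

theorem append_val_singleton (n i : ℕ) :
    Fin.append (Fin.val : Fin n → ℕ) ![i] = Function.update Fin.val (Fin.last n) i := by
  ext a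
  refine Fin.lastCases ?_ (fun a => ?_) a
  · simp [Fin.append_right_eq_snoc]
  · simp [Fin.append_right_eq_snoc, (Fin.castSucc_lt_last a).ne]

theorem append_val_self (n : ℕ) : Fin.append (Fin.val : Fin n → ℕ) ![n] = Fin.val := by
  rw [append_val_singleton]
  exact Function.update_eq_self (Fin.last n) Fin.val

/-- The minor of an infinite matrix on the rows `0, …, n - 1, i` and columns `0, …, n - 1, j`. These
minors are the first and second derivatives of jet Gram determinants. -/
def borderedMinor (A : Matrix ℕ ℕ R) (n i j : ℕ) : R :=
  (A.submatrix (Fin.append (Fin.val : Fin n → ℕ) ![i]) (Fin.append Fin.val ![j])).det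

theorem borderedMinor_self (A : Matrix ℕ ℕ R) (n : ℕ) :
    borderedMinor A n n n = (A.submatrix (Fin.val : Fin (n + 1) → ℕ) Fin.val).det := by
  rw [borderedMinor, append_val_self]

theorem det_leading_mul_det_leading (A : Matrix ℕ ℕ R) (n : ℕ)
    (hA : IsUnit (A.submatrix (Fin.val : Fin n → ℕ) Fin.val).det) :
    (A.submatrix (Fin.val : Fin (n + 2) → ℕ) Fin.val).det *
        (A.submatrix (Fin.val : Fin n → ℕ) Fin.val).det =
      borderedMinor A n n n * borderedMinor A n (n + 1) (n + 1) -
        borderedMinor A n n (n + 1) * borderedMinor A n (n + 1) n := by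
  have indices : Fin.append (Fin.val : Fin n → ℕ) ![n, n + 1] = Fin.val := by
    rw [← append_val_natAdd n 2]
    congr 1
    ext a
    fin_cases a <;> rfl
  have := det_submatrix_append_pair_mul_det A Fin.val Fin.val hA n (n + 1) n (n + 1)
  rwa [indices] at this

theorem sum_det_submatrix_update_col_succ {α : Type*} (A : Matrix α ℕ R) {n : ℕ}
    (r : Fin (n + 1) → α) :
    ∑ b, (A.submatrix r (Function.update Fin.val b ((b : ℕ) + 1))).det =
      (A.submatrix r (Fin.append Fin.val ![n + 1])).det := by
  rw [Fin.sum_univ_castSucc, Finset.sum_eq_zero, zero_add, append_val_singleton, Fin.val_last]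
  intro b _
  refine det_zero_of_column_eq (i := b.castSucc) (j := b.succ) Fin.castSucc_lt_succ.ne fun a => ?_
  simp [Function.update_of_ne (Fin.castSucc_lt_succ (i := b)).ne']

theorem sum_det_submatrix_update_row_succ {β : Type*} (A : Matrix ℕ β R) {n : ℕ}
    (c : Fin (n + 1) → β) :
    ∑ a, (A.submatrix (Function.update Fin.val a ((a : ℕ) + 1)) c).det =
      (A.submatrix (Fin.append Fin.val ![n + 1]) c).det := by
  simpa only [← transpose_submatrix, det_transpose] using
    sum_det_submatrix_update_col_succ Aᵀ c

end Determinants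

/-- `f` is real differentiable at `z` with Wirtinger derivatives `∂f/∂z = p` and `∂f/∂z̄ = q`. -/
def HasWirtingerDerivAt (f : ℂ → ℂ) (p q z : ℂ) : Prop :=
  HasFDerivAt f (p • ContinuousLinearMap.id ℝ ℂ + q • (Complex.conjCLE : ℂ →L[ℝ] ℂ)) z

namespace HasWirtingerDerivAt

variable {f g : ℂ → ℂ} {p q p' q' z : ℂ}

theorem of_hasFDerivAt {L : ℂ →L[ℝ] ℂ} (hf : HasFDerivAt f L z)
    (hL : ∀ v, L v = p * v + q * conj v) : HasWirtingerDerivAt f p q z :=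
  hf.congr_fderiv (ContinuousLinearMap.ext fun v => by simp [hL])

theorem unique (h : HasWirtingerDerivAt f p q z) (h' : HasWirtingerDerivAt f p' q' z) :
    p = p' ∧ q = q' := by
  have same := HasFDerivAt.unique h h'
  have at_one : p + q = p' + q' := by simpa using DFunLike.congr_fun same 1
  have at_I : p - q = p' - q' := by
    have : p * Complex.I - q * Complex.I = p' * Complex.I - q' * Complex.I := by
      simpa [← sub_eq_add_neg] using DFunLike.congr_fun same Complex.I
    exact mul_right_cancel₀ Complex.I_ne_zero (by linear_combination this)
  exact ⟨by linear_combination (at_one + at_I) / 2, by linear_combination (at_one - at_I) / 2⟩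

theorem congr_of_eventuallyEq (h : HasWirtingerDerivAt f p q z) (hg : g =ᶠ[𝓝 z] f) :
    HasWirtingerDerivAt g p q z :=
  HasFDerivAt.congr_of_eventuallyEq h hg

theorem add (hf : HasWirtingerDerivAt f p q z) (hg : HasWirtingerDerivAt g p' q' z) :
    HasWirtingerDerivAt (fun w => f w + g w) (p + p') (q + q') z :=
  of_hasFDerivAt (HasFDerivAt.add hf hg) fun v => by
    simp only [_root_.add_apply, _root_.smul_apply, ContinuousLinearMap.id_apply,
      smul_eq_mul, ContinuousLinearEquiv.coe_coe, ContinuousAlgEquiv.coeCLE_apply,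
      Complex.conjCAE_apply]
    ring

theorem mul (hf : HasWirtingerDerivAt f p q z) (hg : HasWirtingerDerivAt g p' q' z) :
    HasWirtingerDerivAt (fun w => f w * g w) (p * g z + f z * p') (q * g z + f z * q') z :=
  of_hasFDerivAt (HasFDerivAt.mul hf hg) fun v => by
    simp only [smul_add, _root_.add_apply, _root_.smul_apply, ContinuousLinearMap.id_apply,
      smul_eq_mul, ContinuousLinearEquiv.coe_coe, ContinuousAlgEquiv.coeCLE_apply,
      Complex.conjCAE_apply]
    ring

protected theorem inner {E : Type*} [NormedAddCommGroup E] [InnerProductSpace ℂ E] {a b : ℂ → E}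
    {a' b' : E} (ha : HasDerivAt a a' z) (hb : HasDerivAt b b' z) :
    HasWirtingerDerivAt (fun w => ⟪a w, b w⟫) ⟪a z, b'⟫ ⟪a', b z⟫ z :=
  of_hasFDerivAt ((ha.hasFDerivAt.restrictScalars ℝ).inner ℂ (hb.hasFDerivAt.restrictScalars ℝ))
    fun v => by simp [fderivInnerCLM_apply, inner_smul_left, inner_smul_right, mul_comm]

theorem of_hasDerivAt (hf : HasDerivAt f p z) : HasWirtingerDerivAt f p 0 z :=
  of_hasFDerivAt (hf.hasFDerivAt.restrictScalars ℝ) fun v => by simp [mul_comm]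

theorem conj_of_hasDerivAt (hf : HasDerivAt f p z) :
    HasWirtingerDerivAt (fun w => conj (f w)) 0 (conj p) z := by
  simpa using HasWirtingerDerivAt.inner hf (hasDerivAt_const z (1 : ℂ))

protected theorem det {ι : Type*} [Fintype ι] [DecidableEq ι] {M : ℂ → Matrix ι ι ℂ}
    {P Q : Matrix ι ι ℂ} (h : ∀ i j, HasWirtingerDerivAt (fun w => M w i j) (P i j) (Q i j) z) :
    HasWirtingerDerivAt (fun w => (M w).det) (∑ j, ((M z).updateCol j (P.col j)).det)
      (∑ i, ((M z).updateRow i (Q.row i)).det) z := by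
  let det' : ContinuousMultilinearMap ℝ (fun _ : ι => ι → ℂ) ℂ :=
    { (detRowAlternating (R := ℂ) (n := ι)).toMultilinearMap.restrictScalars ℝ with
      cont := Continuous.matrix_det continuous_id }
  let rowDeriv (i : ι) : ℂ →L[ℝ] ι → ℂ := ContinuousLinearMap.pi fun j =>
    P i j • ContinuousLinearMap.id ℝ ℂ + Q i j • (Complex.conjCLE : ℂ →L[ℝ] ℂ)
  have rowDeriv_apply (i : ι) (v : ℂ) : rowDeriv i v = v • P.row i + conj v • Q.row i := by
    ext j
    simp [rowDeriv, mul_comm]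
  have rows (i : ι) : HasFDerivAt (fun w => M w i) (rowDeriv i) z := hasFDerivAt_pi.2 (h i)
  rw [← sum_det_updateRow_eq_sum_det_updateCol]
  refine of_hasFDerivAt (HasFDerivAt.multilinear_comp det' rows) fun v => ?_
  simp only [_root_.sum_apply, Finset.sum_mul, ← Finset.sum_add_distrib]
  refine Finset.sum_congr rfl fun i _ => ?_
  change det (updateRow (M z) i (rowDeriv i v)) = _
  rw [rowDeriv_apply, det_updateRow_add, det_updateRow_smul, det_updateRow_smul]
  ring

end HasWirtingerDerivAt

/-- `f` is twice differentiable at `z`, to the extent needed to form `f² ∂∂̄ log f` there, and the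
value of this expression is `L`. It is encoded without logarithm or division, as
`f · ∂̄∂f - ∂f · ∂̄f`; here `f₁`, `f₂` are `∂f`, `∂̄f` near `z` and `p`, `q` are `∂∂f`, `∂̄∂f` at
`z`. For a Hermitian metric `f` on a line bundle, `-L / f²` is the curvature. -/
def HasLogHessianAt (f : ℂ → ℂ) (L z : ℂ) : Prop :=
  ∃ (f₁ f₂ : ℂ → ℂ) (p q : ℂ), (∀ᶠ w in 𝓝 z, HasWirtingerDerivAt f (f₁ w) (f₂ w) w) ∧
    HasWirtingerDerivAt f₁ p q z ∧ f z * q - f₁ z * f₂ z = L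

namespace HasLogHessianAt

variable {f g ψ : ℂ → ℂ} {L L' z : ℂ}

theorem congr_of_eventuallyEq (h : HasLogHessianAt f L z) (hg : g =ᶠ[𝓝 z] f) :
    HasLogHessianAt g L z := by
  obtain ⟨f₁, f₂, p, q, hf, hf₁, rfl⟩ := h
  refine ⟨f₁, f₂, p, q, ?_, hf₁, by rw [hg.eq_of_nhds]⟩
  filter_upwards [hf, hg.eventuallyEq_nhds] with w hw hgw using hw.congr_of_eventuallyEq hgw

theorem unique (h : HasLogHessianAt f L z) (h' : HasLogHessianAt f L' z) : L = L' := by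
  obtain ⟨f₁, f₂, p, q, hf, hf₁, rfl⟩ := h
  obtain ⟨f₁', f₂', p', q', hf', hf₁', rfl⟩ := h'
  have first : ∀ᶠ w in 𝓝 z, f₁ w = f₁' w ∧ f₂ w = f₂' w := by
    filter_upwards [hf, hf'] with w hw hw' using hw.unique hw'
  have mixed : q = q' :=
    (hf₁.unique (hf₁'.congr_of_eventuallyEq (first.mono fun w hw => hw.1))).2
  rw [mixed, first.self_of_nhds.1, first.self_of_nhds.2]

theorem normSq_mul (hψ : AnalyticAt ℂ ψ z) (hg : HasLogHessianAt g L z) :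
    HasLogHessianAt (fun w => (‖ψ w‖ : ℂ) ^ 2 * g w) ((‖ψ z ^ 2‖ : ℂ) ^ 2 * L) z := by
  obtain ⟨g₁, g₂, p, q, hg, hg₁, rfl⟩ := hg
  have first : ∀ᶠ w in 𝓝 z, HasWirtingerDerivAt (fun w => (‖ψ w‖ : ℂ) ^ 2 * g w)
      (conj (ψ w) * (deriv ψ w * g w + ψ w * g₁ w))
      (ψ w * (conj (deriv ψ w) * g w + conj (ψ w) * g₂ w)) w := by
    filter_upwards [hg, hψ.eventually_analyticAt] with w hgw hψw
    have hψ' := hψw.differentiableAt.hasDerivAt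
    simp only [← Complex.conj_mul']
    convert ((HasWirtingerDerivAt.conj_of_hasDerivAt hψ').mul (.of_hasDerivAt hψ')).mul hgw
      using 1 <;> ring
  have mixed := (HasWirtingerDerivAt.conj_of_hasDerivAt hψ.differentiableAt.hasDerivAt).mul
    (((HasWirtingerDerivAt.of_hasDerivAt hψ.deriv.differentiableAt.hasDerivAt).mul
      hg.self_of_nhds).add
        ((HasWirtingerDerivAt.of_hasDerivAt hψ.differentiableAt.hasDerivAt).mul hg₁))
  refine ⟨_, _, _, _, first, mixed, ?_⟩
  simp only [norm_pow, Complex.ofReal_pow, ← Complex.conj_mul']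
  ring

end HasLogHessianAt

section JetGram

variable {E : Type*} [NormedAddCommGroup E] [InnerProductSpace ℂ E] {σ : ℂ → E} {z : ℂ} {n : ℕ}

/-- The infinite Gram matrix of `σ z, σ' z, σ'' z, …`, whose minors include all the determinants
that arise on differentiating those of `lG σ n`. -/
def jetGram (σ : ℂ → E) (z : ℂ) : Matrix ℕ ℕ ℂ := gram ℂ fun i => iteratedDeriv i σ z

theorem lG_eq_submatrix_jetGram (σ : ℂ → E) (n : ℕ) (z : ℂ) :
    lG σ n z = (jetGram σ z).submatrix Fin.val Fin.val := rfl

theorem det_lG_one (σ : ℂ → E) (z : ℂ) : (lG σ 1 z).det = ⟪σ z, σ z⟫ := by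
  simp [lG]

theorem det_lG_ne_zero {m : ℕ} (hnm : n ≤ m)
    (h : LinearIndependent ℂ fun i : Fin m => iteratedDeriv (i : ℕ) σ z) : (lG σ n z).det ≠ 0 :=
  det_gram_ne_zero_iff_linearIndependent.2 (h.comp _ (Fin.castLE_injective hnm))

theorem differentiableAt_iteratedDeriv_of_lt {m : ℕ} (hσ : ContDiffAt ℂ m σ z) (hn : n < m) :
    DifferentiableAt ℂ (iteratedDeriv n σ) z := by
  rw [iteratedDeriv_eq_equiv_comp]
  exact (LinearIsometryEquiv.differentiable _).differentiableAt.comp z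
    (hσ.differentiableAt_iteratedFDeriv (mod_cast hn))

theorem hasWirtingerDerivAt_det_submatrix_jetGram {ι : Type*} [Fintype ι] [DecidableEq ι]
    {r c : ι → ℕ} (hr : ∀ a, DifferentiableAt ℂ (iteratedDeriv (r a) σ) z)
    (hc : ∀ b, DifferentiableAt ℂ (iteratedDeriv (c b) σ) z) :
    HasWirtingerDerivAt (fun w => ((jetGram σ w).submatrix r c).det)
      (∑ b, ((jetGram σ z).submatrix r (Function.update c b (c b + 1))).det)
      (∑ a, ((jetGram σ z).submatrix (Function.update r a (r a + 1)) c).det) z := by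
  have succ {i : ℕ} (hi : DifferentiableAt ℂ (iteratedDeriv i σ) z) :
      HasDerivAt (iteratedDeriv i σ) (iteratedDeriv (i + 1) σ z) z := by
    rw [iteratedDeriv_succ]
    exact hi.hasDerivAt
  have entries (a b : ι) : HasWirtingerDerivAt (fun w => (jetGram σ w).submatrix r c a b)
      ((jetGram σ z).submatrix r (fun b => c b + 1) a b)
      ((jetGram σ z).submatrix (fun a => r a + 1) c a b) z :=
    .inner (succ (hr a)) (succ (hc b))
  convert HasWirtingerDerivAt.det entries using 4 with b _ a
  · ext i j
    rcases eq_or_ne j b with rfl | hj <;> simp [*]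
  · ext i j
    rcases eq_or_ne i a with rfl | hi <;> simp [*]

theorem hasWirtingerDerivAt_det_lG (hσ : ContDiffAt ℂ (n + 1) σ z) :
    HasWirtingerDerivAt (fun w => (lG σ (n + 1) w).det) (borderedMinor (jetGram σ z) n n (n + 1))
      (borderedMinor (jetGram σ z) n (n + 1) n) z := by
  have diff (a : Fin (n + 1)) : DifferentiableAt ℂ (iteratedDeriv (a : ℕ) σ) z :=
    differentiableAt_iteratedDeriv_of_lt (m := n + 1) (mod_cast hσ) a.is_lt
  have := hasWirtingerDerivAt_det_submatrix_jetGram diff diff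
  rw [sum_det_submatrix_update_col_succ, sum_det_submatrix_update_row_succ] at this
  simp only [lG_eq_submatrix_jetGram, borderedMinor, append_val_self]
  exact this

theorem exists_hasWirtingerDerivAt_borderedMinor (hσ : ContDiffAt ℂ (n + 2) σ z) :
    ∃ p, HasWirtingerDerivAt (fun w => borderedMinor (jetGram σ w) n n (n + 1)) p
      (borderedMinor (jetGram σ z) n (n + 1) (n + 1)) z := by
  have diff {i : ℕ} (hi : i < n + 2) : DifferentiableAt ℂ (iteratedDeriv i σ) z :=
    differentiableAt_iteratedDeriv_of_lt (m := n + 2) (mod_cast hσ) hi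
  have cols (b : Fin (n + 1)) :
      DifferentiableAt ℂ (iteratedDeriv (Fin.append Fin.val ![n + 1] b) σ) z := by
    refine diff ?_
    rw [append_val_singleton, Function.update_apply]
    split_ifs <;> lia
  have := hasWirtingerDerivAt_det_submatrix_jetGram (r := (Fin.val : Fin (n + 1) → ℕ))
    (fun a => diff (by lia)) cols
  rw [sum_det_submatrix_update_row_succ] at this
  simp only [borderedMinor, append_val_self]
  exact ⟨_, this⟩

/-- The Toda equation. The right-hand side comes from the Desnanot–Jacobi identity, as `∂`, `∂̄` and
`∂̄∂` move the last column, the last row, or both one step further. -/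
theorem hasLogHessianAt_det_lG (hσ : ContDiffAt ℂ (n + 2) σ z) (hn : (lG σ n z).det ≠ 0) :
    HasLogHessianAt (fun w => (lG σ (n + 1) w).det) ((lG σ (n + 2) z).det * (lG σ n z).det) z := by
  obtain ⟨p, mixed⟩ := exists_hasWirtingerDerivAt_borderedMinor hσ
  have hσ' : ContDiffAt ℂ (n + 1) σ z := hσ.of_le (by gcongr; norm_num)
  have first : ∀ᶠ w in 𝓝 z, HasWirtingerDerivAt (fun w => (lG σ (n + 1) w).det)
      (borderedMinor (jetGram σ w) n n (n + 1)) (borderedMinor (jetGram σ w) n (n + 1) n) w := by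
    filter_upwards [hσ'.eventually (mod_cast ENat.natCast_ne_top (n + 1))] with w hw
      using hasWirtingerDerivAt_det_lG hw
  refine ⟨_, _, p, _, first, mixed, ?_⟩
  simp only [lG_eq_submatrix_jetGram] at hn ⊢
  rw [det_leading_mul_det_leading _ _ hn.isUnit, borderedMinor_self]

end JetGram

/-- The line bundle metrics `g` and `f` over `U` differ by a holomorphic nowhere-vanishing change of
frame `ψ`, in the direction `|ψ|² g = f`. -/
def FrameEquivOn (U : Set ℂ) (g f : ℂ → ℂ) : Prop :=
  ∃ ψ : ℂ → ℂ, DifferentiableOn ℂ ψ U ∧ (∀ z ∈ U, ψ z ≠ 0) ∧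
    ∀ z ∈ U, (‖ψ z‖ : ℂ) ^ 2 * g z = f z

namespace FrameEquivOn

variable {U : Set ℂ} {f f' g g' L M : ℂ → ℂ}

theorem logHessian (hU : IsOpen U) (h : FrameEquivOn U g f)
    (hf : ∀ z ∈ U, HasLogHessianAt f (L z) z) (hg : ∀ z ∈ U, HasLogHessianAt g (M z) z) :
    FrameEquivOn U M L := by
  obtain ⟨ψ, hψ, hψ₀, hgf⟩ := h
  refine ⟨fun z => ψ z ^ 2, hψ.pow 2, fun z hz => pow_ne_zero 2 (hψ₀ z hz), fun z hz => ?_⟩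
  have hfψ : f =ᶠ[𝓝 z] fun w => (‖ψ w‖ : ℂ) ^ 2 * g w := by
    filter_upwards [hU.mem_nhds hz] with w hw using (hgf w hw).symm
  have hψz : AnalyticAt ℂ ψ z := hψ.analyticAt (hU.mem_nhds hz)
  exact (((hg z hz).normSq_mul hψz).congr_of_eventuallyEq hfψ).unique (hf z hz)

theorem of_mul_left (h : FrameEquivOn U g f)
    (hmul : FrameEquivOn U (fun z => g z * g' z) fun z => f z * f' z) (hf : ∀ z ∈ U, f z ≠ 0) :
    FrameEquivOn U g' f' := by
  obtain ⟨ψ, hψ, hψ₀, hgf⟩ := h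
  obtain ⟨χ, hχ, hχ₀, hprod⟩ := hmul
  refine ⟨fun z => χ z / ψ z, hχ.div hψ hψ₀, fun z hz => div_ne_zero (hχ₀ z hz) (hψ₀ z hz),
    fun z hz => mul_left_cancel₀ (hf z hz) ?_⟩
  have hψz : (‖ψ z‖ : ℂ) ≠ 0 := by simpa using hψ₀ z hz
  have hprodz : (‖χ z‖ : ℂ) ^ 2 * (g z * g' z) = f z * f' z := hprod z hz
  rw [← hprodz, ← hgf z hz, norm_div, Complex.ofReal_div]
  field_simp

end FrameEquivOn

section DetJetEquivOn

variable {E F : Type*} [NormedAddCommGroup E] [InnerProductSpace ℂ E] [NormedAddCommGroup F]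
  [InnerProductSpace ℂ F] {U : Set ℂ} {σ : ℂ → E} {τ : ℂ → F}

/-- Equivalence over `U` of the determinant bundles `det Jₙ₋₁` of the line bundles with frames `σ`
and `τ`. The index `n` is the size of the Gram matrices, so that `n = 0` is the trivial bundle and
`n = 1` the line bundle itself. -/
def DetJetEquivOn (U : Set ℂ) (σ : ℂ → E) (τ : ℂ → F) (n : ℕ) : Prop :=
  FrameEquivOn U (fun z => (lG τ n z).det) fun z => (lG σ n z).det

theorem detJetEquivOn_zero (U : Set ℂ) (σ : ℂ → E) (τ : ℂ → F) : DetJetEquivOn U σ τ 0 :=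
  ⟨fun _ => 1, by simp, by simp, by simp⟩

theorem DetJetEquivOn.iff_add_two {n : ℕ} (h : DetJetEquivOn U σ τ (n + 1)) (hU : IsOpen U)
    (hσ : ContDiffOn ℂ (n + 2) σ U) (hτ : ContDiffOn ℂ (n + 2) τ U)
    (hσ₀ : ∀ z ∈ U, (lG σ n z).det ≠ 0) (hσ₂ : ∀ z ∈ U, (lG σ (n + 2) z).det ≠ 0)
    (hτ₀ : ∀ z ∈ U, (lG τ n z).det ≠ 0) :
    DetJetEquivOn U σ τ n ↔ DetJetEquivOn U σ τ (n + 2) := by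
  have prod : FrameEquivOn U (fun z => (lG τ (n + 2) z).det * (lG τ n z).det)
      fun z => (lG σ (n + 2) z).det * (lG σ n z).det :=
    h.logHessian hU
      (fun z hz => hasLogHessianAt_det_lG (hσ.contDiffAt (hU.mem_nhds hz)) (hσ₀ z hz))
      (fun z hz => hasLogHessianAt_det_lG (hτ.contDiffAt (hU.mem_nhds hz)) (hτ₀ z hz))
  constructor
  · intro h₀
    simp only [mul_comm (lG _ (n + 2) _).det] at prod
    exact h₀.of_mul_left prod hσ₀
  · intro h₂
    exact h₂.of_mul_left prod hσ₂

theorem detJetEquivOn_and_succ_iff {k : ℕ} (hU : IsOpen U) (hσ : ContDiffOn ℂ (k + 2) σ U)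
    (hτ : ContDiffOn ℂ (k + 2) τ U)
    (hσ₀ : ∀ z ∈ U, LinearIndependent ℂ fun i : Fin (k + 2) => iteratedDeriv (i : ℕ) σ z)
    (hτ₀ : ∀ z ∈ U, LinearIndependent ℂ fun i : Fin (k + 2) => iteratedDeriv (i : ℕ) τ z) :
    DetJetEquivOn U σ τ (k + 1) ∧ DetJetEquivOn U σ τ (k + 2) ↔ DetJetEquivOn U σ τ 1 := by
  suffices ∀ m ≤ k + 1, DetJetEquivOn U σ τ m ∧ DetJetEquivOn U σ τ (m + 1) ↔
      DetJetEquivOn U σ τ 1 from this (k + 1) le_rfl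
  intro m hm
  induction m with
  | zero => exact and_iff_right (detJetEquivOn_zero U σ τ)
  | succ n ih =>
    have hnk : n + 2 ≤ k + 2 := by lia
    have shift (h : DetJetEquivOn U σ τ (n + 1)) :
        DetJetEquivOn U σ τ n ↔ DetJetEquivOn U σ τ (n + 2) :=
      h.iff_add_two hU (hσ.of_le (mod_cast hnk)) (hτ.of_le (mod_cast hnk))
        (fun z hz => det_lG_ne_zero (by lia) (hσ₀ z hz))
        (fun z hz => det_lG_ne_zero hnk (hσ₀ z hz))
        (fun z hz => det_lG_ne_zero (by lia) (hτ₀ z hz))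
    have swap : DetJetEquivOn U σ τ (n + 1) ∧ DetJetEquivOn U σ τ (n + 2) ↔
        DetJetEquivOn U σ τ n ∧ DetJetEquivOn U σ τ (n + 1) := by
      rw [and_comm (a := DetJetEquivOn U σ τ n)]
      exact and_congr_right fun h => (shift h).symm
    exact swap.trans (ih (by lia))

end DetJetEquivOn

theorem stmt8_general {E F : Type*} [NormedAddCommGroup E] [InnerProductSpace ℂ E]
    [NormedAddCommGroup F] [InnerProductSpace ℂ F] (Ω : Set ℂ) (k : ℕ)
    (σ : ℂ → E) (τ : ℂ → F) (hσ : ContDiffOn ℂ (k + 2) σ Ω) (hτ : ContDiffOn ℂ (k + 2) τ Ω)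
    (hσ₀ : ∀ z ∈ Ω, LinearIndependent ℂ fun i : Fin (k + 2) => iteratedDeriv (i : ℕ) σ z)
    (hτ₀ : ∀ z ∈ Ω, LinearIndependent ℂ fun i : Fin (k + 2) => iteratedDeriv (i : ℕ) τ z) :
    (∀ z₀ ∈ Ω, ∃ U : Set ℂ, IsOpen U ∧ z₀ ∈ U ∧ U ⊆ Ω ∧
      ∃ ψ ψ' : ℂ → ℂ,
        DifferentiableOn ℂ ψ U ∧ (∀ z ∈ U, ψ z ≠ 0) ∧
        DifferentiableOn ℂ ψ' U ∧ (∀ z ∈ U, ψ' z ≠ 0) ∧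
        (∀ z ∈ U, (‖ψ z‖ : ℂ) ^ 2 * (lG τ (k + 1) z).det = (lG σ (k + 1) z).det) ∧
        (∀ z ∈ U, (‖ψ' z‖ : ℂ) ^ 2 * (lG τ (k + 2) z).det = (lG σ (k + 2) z).det)) ↔
    (∀ z₀ ∈ Ω, ∃ U : Set ℂ, IsOpen U ∧ z₀ ∈ U ∧ U ⊆ Ω ∧
      ∃ φ : ℂ → ℂ, DifferentiableOn ℂ φ U ∧ (∀ z ∈ U, φ z ≠ 0) ∧
        ∀ z ∈ U, (‖φ z‖ : ℂ) ^ 2 * ⟪τ z, τ z⟫ = ⟪σ z, σ z⟫) := by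
  refine forall₂_congr fun z₀ _ => exists_congr fun U => and_congr_right fun hU =>
    and_congr_right fun _ => and_congr_right fun hUΩ => ?_
  have key := detJetEquivOn_and_succ_iff hU (hσ.mono hUΩ) (hτ.mono hUΩ)
    (fun z hz => hσ₀ z (hUΩ hz)) (fun z hz => hτ₀ z (hUΩ hz))
  simp only [DetJetEquivOn, FrameEquivOn, det_lG_one] at key
  rw [← key]
  constructor
  · rintro ⟨ψ, χ, hψ, hψ₀, hχ, hχ₀, eq_k, eq_succ⟩
    exact ⟨⟨ψ, hψ, hψ₀, eq_k⟩, ⟨χ, hχ, hχ₀, eq_succ⟩⟩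
  · rintro ⟨⟨ψ, hψ, hψ₀, eq_k⟩, ⟨χ, hχ, hχ₀, eq_succ⟩⟩
    exact ⟨ψ, χ, hψ, hψ₀, hχ, hχ₀, eq_k, eq_succ⟩

/-- For `(k+1)`-nondegenerate holomorphic maps `σ, σ̃` on an open `Ω ⊆ ℂ` (`k ≥ 1`):
the determinant bundles `det J_k` and `det J_{k+1}` of the two line bundles are locally
equivalent if and only if the line bundles themselves are locally equivalent. -/
theorem stmt8 (Ω : Set ℂ) (hΩ : IsOpen Ω)
    (k : ℕ) (hk : 1 ≤ k) (σ : ℂ → H) (σ' : ℂ → H')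
    (hσ : DifferentiableOn ℂ σ Ω) (hσ' : DifferentiableOn ℂ σ' Ω)
    (hnd : ∀ z ∈ Ω, LinearIndependent ℂ fun i : Fin (k + 2) => iteratedDeriv (i : ℕ) σ z)
    (hnd' : ∀ z ∈ Ω, LinearIndependent ℂ fun i : Fin (k + 2) => iteratedDeriv (i : ℕ) σ' z) :
    (∀ z₀ ∈ Ω, ∃ U : Set ℂ, IsOpen U ∧ z₀ ∈ U ∧ U ⊆ Ω ∧
      ∃ ψ ψ' : ℂ → ℂ,
        DifferentiableOn ℂ ψ U ∧ (∀ z ∈ U, ψ z ≠ 0) ∧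
        DifferentiableOn ℂ ψ' U ∧ (∀ z ∈ U, ψ' z ≠ 0) ∧
        (∀ z ∈ U, (‖ψ z‖ : ℂ) ^ 2 * (lG σ' (k + 1) z).det = (lG σ (k + 1) z).det) ∧
        (∀ z ∈ U, (‖ψ' z‖ : ℂ) ^ 2 * (lG σ' (k + 2) z).det = (lG σ (k + 2) z).det)) ↔
    (∀ z₀ ∈ Ω, ∃ U : Set ℂ, IsOpen U ∧ z₀ ∈ U ∧ U ⊆ Ω ∧
      ∃ φ : ℂ → ℂ, DifferentiableOn ℂ φ U ∧ (∀ z ∈ U, φ z ≠ 0) ∧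
        ∀ z ∈ U, (‖φ z‖ : ℂ) ^ 2 * ⟪σ' z, σ' z⟫ = ⟪σ z, σ z⟫) :=
  stmt8_general Ω k σ σ' (hσ.contDiffOn hΩ) (hσ'.contDiffOn hΩ) hnd hnd'
end
end

section
/- Let σ_1,…,σ_n : Ω → H be a holomorphic frame with σ_1(z),…,σ_n(z) linearly independent for every z ∈ Ω (0-nondegenerate), and set h(z) := h_0(z) = (⟨σ_j(z),σ_i(z)⟩)_{i,j=1}^n, which is invertible for every z. Then for every z ∈ Ω, ∂/∂z̄ ( h⁻¹ · ∂h/∂z )(z) = (det h(z))⁻¹ · h(z)⁻¹ · h_1(z); that is, the curvature of the bundle spanned by the frame is given by 𝒦(z) = (det h(z))⁻¹ h(z)⁻¹ h_1(z) dz̄∧dz. -/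
open Matrix

noncomputable section

/-- Wirtinger derivative `∂g/∂z := (1/2)(∂g/∂x − i·∂g/∂y)`. -/
def Dz {E : Type*} [NormedAddCommGroup E] [NormedSpace ℂ E] (g : ℂ → E) (z : ℂ) : E :=
  (1 / 2 : ℂ) • (fderiv ℝ g z 1 - Complex.I • fderiv ℝ g z Complex.I)

/-- Wirtinger derivative `∂g/∂z̄ := (1/2)(∂g/∂x + i·∂g/∂y)`. -/
def Dzbar {E : Type*} [NormedAddCommGroup E] [NormedSpace ℂ E] (g : ℂ → E) (z : ℂ) : E :=
  (1 / 2 : ℂ) • (fderiv ℝ g z 1 + Complex.I • fderiv ℝ g z Complex.I)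

/-- Entrywise Wirtinger derivative `∂/∂z` of a matrix-valued function. -/
def mDz {ι : Type*} (M : ℂ → Matrix ι ι ℂ) (z : ℂ) : Matrix ι ι ℂ :=
  Matrix.of fun i j => Dz (fun w => M w i j) z

/-- Entrywise Wirtinger derivative `∂/∂z̄` of a matrix-valued function. -/
def mDzbar {ι : Type*} (M : ℂ → Matrix ι ι ℂ) (z : ℂ) : Matrix ι ι ℂ :=
  Matrix.of fun i j => Dzbar (fun w => M w i j) z

variable {H : Type*} [NormedAddCommGroup H] [InnerProductSpace ℂ H] [CompleteSpace H]

/-- `⟪x, y⟫` is the Mathlib inner product (conjugate-linear in the first argument);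
it equals the paper's inner product `⟨y, x⟩`, which is linear in the first argument. -/
local notation "⟪" x ", " y "⟫" => (inner ℂ x y : ℂ)

/-- `jGram σ N z` is the Gram matrix of the family
`(σ_1(z),…,σ_n(z), σ_1′(z),…,σ_n′(z),…,σ_1^{(N−1)}(z),…,σ_n^{(N−1)}(z))`, with `(a,b)` entry
equal to `⟨b-th vector, a-th vector⟩_paper = ⟪a-th vector, b-th vector⟫`.  The jet Gram matrix
`J_k h` of the paper is `jGram σ (k+1)`. -/
def jGram {n : ℕ} (σ : Fin n → ℂ → H) (N : ℕ) (z : ℂ) :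
    Matrix (Fin N × Fin n) (Fin N × Fin n) ℂ :=
  Matrix.of fun p q =>
    ⟪iteratedDeriv (p.1 : ℕ) (σ p.2) z, iteratedDeriv (q.1 : ℕ) (σ q.2) z⟫

/-- `hMat σ m z` is the paper's matrix `h_m(z)`: its `(i,j)` entry is the determinant of the
`(nm+1)×(nm+1)` matrix whose `(a,b)` entry is `⟨u_b, v_a⟩_paper = ⟪v_a, u_b⟫`, where
`u` is the family `(σ_1(z),…,σ_n^{(m−1)}(z))` followed by `σ_j^{(m)}(z)` and `v` is the same
family followed by `σ_i^{(m)}(z)`.  (For `m = 0` this is the Gram matrix `h_0 = J_0 h`.) -/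
def hMat {n : ℕ} (σ : Fin n → ℂ → H) (m : ℕ) (z : ℂ) : Matrix (Fin n) (Fin n) ℂ :=
  Matrix.of fun i j =>
    (Matrix.of fun a b : (Fin m × Fin n) ⊕ Unit =>
      ⟪Sum.elim (fun lp : Fin m × Fin n => iteratedDeriv (lp.1 : ℕ) (σ lp.2) z)
          (fun _ => iteratedDeriv m (σ i) z) a,
        Sum.elim (fun lp : Fin m × Fin n => iteratedDeriv (lp.1 : ℕ) (σ lp.2) z)
          (fun _ => iteratedDeriv m (σ j) z) b⟫).det

/-- `fGram σ z` is the metric matrix `h(z) = (⟨σ_j(z),σ_i(z)⟩_paper)_{i,j} = (⟪σ_i,σ_j⟫)_{i,j}`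
of the frame `σ_1,…,σ_n`. -/
def fGram {n : ℕ} (σ : Fin n → ℂ → H) (z : ℂ) : Matrix (Fin n) (Fin n) ℂ :=
  Matrix.of fun i j => ⟪σ i z, σ j z⟫

/-!
By the Leibniz rule, `∂̄(h⁻¹ ∂h) = h⁻¹ (∂̄∂h - ∂̄h h⁻¹ ∂h)`.  Since the frame is holomorphic, `∂`
differentiates only the linear and `∂̄` only the conjugate-linear slot of the inner products in
`h`, so `h`, `∂h`, `∂̄h` and `∂̄∂h` are the blocks of the Gram matrix of the `1`-jet of the frame.
The bracket is therefore the Schur complement of `h` in that Gram matrix, and its entries are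
the bordered determinants which define `h_1`, divided by `det h`.
-/

open Filter Topology UniformSpace
open scoped Ring

section Wirtinger

variable {E : Type*} [NormedAddCommGroup E] [NormedSpace ℂ E] {f g : ℂ → E} {z : ℂ}

theorem Dzbar_congr (h : f =ᶠ[𝓝 z] g) : Dzbar f z = Dzbar g z := by
  simp only [Dzbar, h.fderiv_eq]

theorem Dz_eq_deriv (hf : DifferentiableAt ℂ f z) : Dz f z = deriv f z := by
  simp only [Dz, hf.fderiv_restrictScalars ℝ, ContinuousLinearMap.coe_restrictScalars',
    fderiv_eq_smul_deriv, smul_smul, Complex.I_mul_I]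
  module

theorem Dzbar_eq_zero (hf : DifferentiableAt ℂ f z) : Dzbar f z = 0 := by
  simp only [Dzbar, hf.fderiv_restrictScalars ℝ, ContinuousLinearMap.coe_restrictScalars',
    fderiv_eq_smul_deriv, smul_smul, Complex.I_mul_I]
  module

theorem Dzbar_clm_comp {F : Type*} [NormedAddCommGroup F] [NormedSpace ℂ F] (L : E →L[ℂ] F)
    (hf : DifferentiableAt ℝ f z) : Dzbar (fun w => L (f w)) z = L (Dzbar f z) := by
  have hL : fderiv ℝ (fun w => L (f w)) z = (L.restrictScalars ℝ).comp (fderiv ℝ f z) :=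
    (L.restrictScalars ℝ).hasFDerivAt.comp z hf.hasFDerivAt |>.fderiv
  simp [Dzbar, hL]

end Wirtinger

section BanachAlgebra

variable {A : Type*} [NormedRing A] [NormedAlgebra ℂ A] {a b : ℂ → A} {z : ℂ}

theorem Dzbar_mul (ha : DifferentiableAt ℝ a z) (hb : DifferentiableAt ℝ b z) :
    Dzbar (fun w => a w * b w) z = Dzbar a z * b z + a z * Dzbar b z := by
  simp only [Dzbar, fderiv_fun_mul' ha hb, _root_.add_apply, _root_.smul_apply, smul_eq_mul,
    MulOpposite.smul_eq_mul_unop, MulOpposite.unop_op, smul_add, mul_add, add_mul,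
    smul_mul_assoc, mul_smul_comm]
  abel

theorem Dzbar_ringInverse [HasSummableGeomSeries A] (ha : DifferentiableAt ℝ a z)
    (hz : IsUnit (a z)) :
    Dzbar (fun w => (a w)⁻¹ʳ) z = -((a z)⁻¹ʳ * Dzbar a z * (a z)⁻¹ʳ) := by
  obtain ⟨u, hu⟩ := hz
  have hinv := hasFDerivAt_ringInverse (𝕜 := ℝ) u
  rw [hu] at hinv
  have hcomp : fderiv ℝ (fun w => (a w)⁻¹ʳ) z = _ := (hinv.comp z ha.hasFDerivAt).fderiv
  simp only [Dzbar, hcomp, ContinuousLinearMap.neg_comp, _root_.neg_apply,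
    ContinuousLinearMap.comp_apply, ContinuousLinearMap.mulLeftRight_apply, ← hu,
    Ring.inverse_unit, smul_neg, smul_add, mul_add, add_mul, mul_smul_comm, smul_mul_assoc]
  abel

theorem Dzbar_ringInverse_mul [HasSummableGeomSeries A] (ha : DifferentiableAt ℝ a z)
    (hb : DifferentiableAt ℝ b z) (hz : IsUnit (a z)) :
    Dzbar (fun w => (a w)⁻¹ʳ * b w) z =
      (a z)⁻¹ʳ * (Dzbar b z - Dzbar a z * (a z)⁻¹ʳ * b z) := by
  rw [Dzbar_mul (ha.inverse hz) hb, Dzbar_ringInverse ha hz]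
  noncomm_ring

end BanachAlgebra

section MatrixValued

theorem mDzbar_congr {ι : Type*} {M N : ℂ → Matrix ι ι ℂ} {z : ℂ} (h : M =ᶠ[𝓝 z] N) :
    mDzbar M z = mDzbar N z := by
  ext i j
  exact Dzbar_congr (h.fun_comp fun X => X i j)

theorem differentiableAt_matrix {m n X : Type*} [Finite m] [Finite n] [NormedAddCommGroup X]
    [NormedSpace ℝ X] {M : X → Matrix m n ℂ} {x : X}
    (hM : ∀ i j, DifferentiableAt ℝ (fun y => M y i j) x) : DifferentiableAt ℝ M x := by
  have := Fintype.ofFinite m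
  have := Fintype.ofFinite n
  exact differentiableAt_pi (Φ := fun y i j => M y i j) |>.mpr fun i =>
    differentiableAt_pi.mpr (hM i)

open scoped Matrix.Norms.Operator

variable {ι : Type*} [Fintype ι] {M N : ℂ → Matrix ι ι ℂ} {z : ℂ}

theorem mDzbar_eq_Dzbar (hM : DifferentiableAt ℝ M z) : mDzbar M z = Dzbar M z := by
  ext i j
  exact Dzbar_clm_comp (Matrix.entryLinearMap ℂ ℂ i j).toContinuousLinearMap hM

theorem mDzbar_inv_mul [DecidableEq ι] (hM : ∀ i j, DifferentiableAt ℝ (fun w => M w i j) z)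
    (hN : ∀ i j, DifferentiableAt ℝ (fun w => N w i j) z) (hz : IsUnit (M z)) :
    mDzbar (fun w => (M w)⁻¹ * N w) z =
      (M z)⁻¹ * (mDzbar N z - mDzbar M z * (M z)⁻¹ * N z) := by
  have hM' := differentiableAt_matrix hM
  have hN' := differentiableAt_matrix hN
  simp only [Matrix.nonsing_inv_eq_ringInverse]
  rw [mDzbar_eq_Dzbar hM', mDzbar_eq_Dzbar hN', mDzbar_eq_Dzbar ((hM'.inverse hz).fun_mul hN'),
    Dzbar_ringInverse_mul hM' hN' hz]

end MatrixValued

section Inner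

variable {F : Type*} [NormedAddCommGroup F] [InnerProductSpace ℂ F] {f g : ℂ → F} {z : ℂ}

theorem Dz_inner (hf : DifferentiableAt ℝ f z) (hg : DifferentiableAt ℝ g z) :
    Dz (fun w => ⟪f w, g w⟫) z = ⟪Dzbar f z, g z⟫ + ⟪f z, Dz g z⟫ := by
  simp only [Dz, Dzbar, fderiv_inner_apply ℂ hf hg, inner_smul_left, inner_smul_right,
    inner_add_left, inner_sub_right, map_div₀, map_one, map_ofNat, Complex.conj_I, smul_eq_mul]
  ring

theorem Dzbar_inner (hf : DifferentiableAt ℝ f z) (hg : DifferentiableAt ℝ g z) :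
    Dzbar (fun w => ⟪f w, g w⟫) z = ⟪Dz f z, g z⟫ + ⟪f z, Dzbar g z⟫ := by
  simp only [Dz, Dzbar, fderiv_inner_apply ℂ hf hg, inner_smul_left, inner_smul_right,
    inner_sub_left, inner_add_right, map_div₀, map_one, map_ofNat, Complex.conj_I, smul_eq_mul]
  ring

theorem Dz_inner_of_differentiableAt (hf : DifferentiableAt ℂ f z)
    (hg : DifferentiableAt ℂ g z) :
    Dz (fun w => ⟪f w, g w⟫) z = ⟪f z, deriv g z⟫ := by
  rw [Dz_inner (hf.restrictScalars ℝ) (hg.restrictScalars ℝ), Dzbar_eq_zero hf, Dz_eq_deriv hg,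
    inner_zero_left, zero_add]

theorem Dzbar_inner_of_differentiableAt (hf : DifferentiableAt ℂ f z)
    (hg : DifferentiableAt ℂ g z) :
    Dzbar (fun w => ⟪f w, g w⟫) z = ⟪deriv f z, g z⟫ := by
  rw [Dzbar_inner (hf.restrictScalars ℝ) (hg.restrictScalars ℝ), Dz_eq_deriv hf, Dzbar_eq_zero hg,
    inner_zero_right, add_zero]

theorem deriv_coe_completion (hg : DifferentiableAt ℂ g z) :
    deriv (fun w => (g w : Completion F)) z = (deriv g z : F) :=
  ((Completion.toComplL (𝕜 := ℂ) (E := F)).hasFDerivAt.comp_hasDerivAt z hg.hasDerivAt).deriv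

theorem differentiableAt_coe_completion (hg : DifferentiableAt ℂ g z) :
    DifferentiableAt ℂ (fun w => (g w : Completion F)) z :=
  (Completion.toComplL (𝕜 := ℂ) (E := F)).differentiableAt.comp z hg

theorem differentiableAt_deriv_coe_completion (hg : ∀ᶠ w in 𝓝 z, DifferentiableAt ℂ g w) :
    DifferentiableAt ℂ (deriv fun w => (g w : Completion F)) z := by
  have hg' : ∀ᶠ w in 𝓝 z, DifferentiableAt ℂ (fun v => (g v : Completion F)) w :=
    hg.mono fun _ hw => differentiableAt_coe_completion hw
  exact (Complex.analyticAt_iff_eventually_differentiableAt.mpr hg').deriv.differentiableAt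

-- `deriv g` need not be differentiable in `F`, only in its completion.
theorem inner_deriv_eventuallyEq_completion (hg : ∀ᶠ w in 𝓝 z, DifferentiableAt ℂ g w) :
    (fun w => ⟪f w, deriv g w⟫) =ᶠ[𝓝 z]
      fun w => ⟪(f w : Completion F), deriv (fun v => (g v : Completion F)) w⟫ := by
  filter_upwards [hg] with w hw
  rw [deriv_coe_completion hw, Completion.inner_coe]

theorem differentiableAt_inner_deriv (hf : DifferentiableAt ℂ f z)
    (hg : ∀ᶠ w in 𝓝 z, DifferentiableAt ℂ g w) :
    DifferentiableAt ℝ (fun w => ⟪f w, deriv g w⟫) z :=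
  (((differentiableAt_coe_completion hf).restrictScalars ℝ).inner ℂ
    ((differentiableAt_deriv_coe_completion hg).restrictScalars ℝ)).congr_of_eventuallyEq
    (inner_deriv_eventuallyEq_completion hg)

theorem Dzbar_inner_deriv (hf : DifferentiableAt ℂ f z)
    (hg : ∀ᶠ w in 𝓝 z, DifferentiableAt ℂ g w) :
    Dzbar (fun w => ⟪f w, deriv g w⟫) z = ⟪deriv f z, deriv g z⟫ := by
  rw [Dzbar_congr (inner_deriv_eventuallyEq_completion hg),
    Dzbar_inner_of_differentiableAt (differentiableAt_coe_completion hf)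
      (differentiableAt_deriv_coe_completion hg),
    deriv_coe_completion hf, deriv_coe_completion hg.self_of_nhds, Completion.inner_coe]

end Inner

theorem det_fromBlocks_unit {m R : Type*} [Fintype m] [DecidableEq m] [CommRing R]
    {M : Matrix m m R} (hM : IsUnit M) (b c : m → R) (d : R) :
    (fromBlocks M (replicateCol Unit b) (replicateRow Unit c) (of fun _ _ => d)).det =
      M.det * (d - c ⬝ᵥ M⁻¹ *ᵥ b) := by
  let := hM.invertible
  rw [det_fromBlocks₁₁, det_unique (n := Unit), invOf_eq_nonsing_inv, Matrix.mul_assoc,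
    ← replicateCol_mulVec]
  simp only [Matrix.sub_apply, of_apply, replicateRow_mul_replicateCol_apply]

section Frame

variable {F : Type*} [NormedAddCommGroup F] [InnerProductSpace ℂ F] {n : ℕ}
  {σ : Fin n → ℂ → F} {z : ℂ}

/-- The pointwise Gram matrix `(⟪σ i z, τ j z⟫)_{i,j}` of one family against another.  With
`h = fGram σ` and `σ' = deriv ∘ σ`, it gives `∂h`, `∂̄h` and `∂̄∂h` as `crossGram σ σ'`,
`crossGram σ' σ` and `crossGram σ' σ'`. -/
def crossGram {ι : Type*} (σ τ : ι → ℂ → F) (z : ℂ) : Matrix ι ι ℂ :=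
  Matrix.of fun i j => ⟪σ i z, τ j z⟫

/-- The Schur complement `∂̄∂h - ∂̄h h⁻¹ ∂h` of `h(z) = fGram σ z` in the Gram matrix of the
`1`-jet of the family `σ` at `z`. -/
def jetSchurCompl (σ : Fin n → ℂ → F) (z : ℂ) : Matrix (Fin n) (Fin n) ℂ :=
  crossGram (deriv ∘ σ) (deriv ∘ σ) z -
    crossGram (deriv ∘ σ) σ z * (fGram σ z)⁻¹ * crossGram σ (deriv ∘ σ) z

theorem isUnit_fGram_iff : IsUnit (fGram σ z) ↔ LinearIndependent ℂ fun i => σ i z := by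
  rw [isUnit_iff_isUnit_det, isUnit_iff_ne_zero]
  exact det_gram_ne_zero_iff_linearIndependent

theorem mDz_fGram (hσ : ∀ i, DifferentiableAt ℂ (σ i) z) :
    mDz (fGram σ) z = crossGram σ (deriv ∘ σ) z := by
  ext i j
  exact Dz_inner_of_differentiableAt (hσ i) (hσ j)

theorem mDzbar_fGram (hσ : ∀ i, DifferentiableAt ℂ (σ i) z) :
    mDzbar (fGram σ) z = crossGram (deriv ∘ σ) σ z := by
  ext i j
  exact Dzbar_inner_of_differentiableAt (hσ i) (hσ j)

theorem mDzbar_crossGram_deriv {ι : Type*} {σ τ : ι → ℂ → F}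
    (hσ : ∀ i, DifferentiableAt ℂ (σ i) z)
    (hτ : ∀ i, ∀ᶠ w in 𝓝 z, DifferentiableAt ℂ (τ i) w) :
    mDzbar (crossGram σ (deriv ∘ τ)) z = crossGram (deriv ∘ σ) (deriv ∘ τ) z := by
  ext i j
  exact Dzbar_inner_deriv (hσ i) (hτ j)

theorem mDzbar_inv_fGram_mul_mDz_fGram
    (hσ : ∀ i, ∀ᶠ w in 𝓝 z, DifferentiableAt ℂ (σ i) w) (hz : IsUnit (fGram σ z)) :
    mDzbar (fun w => (fGram σ w)⁻¹ * mDz (fGram σ) w) z =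
      (fGram σ z)⁻¹ * jetSchurCompl σ z := by
  have hσz i : DifferentiableAt ℂ (σ i) z := (hσ i).self_of_nhds
  have hmDz : (fun w => (fGram σ w)⁻¹ * mDz (fGram σ) w) =ᶠ[𝓝 z]
      fun w => (fGram σ w)⁻¹ * crossGram σ (deriv ∘ σ) w := by
    filter_upwards [eventually_all.mpr hσ] with w hw
    rw [mDz_fGram hw]
  have hh i j : DifferentiableAt ℝ (fun w => fGram σ w i j) z :=
    ((hσz i).restrictScalars ℝ).inner ℂ ((hσz j).restrictScalars ℝ)
  have hdh i j : DifferentiableAt ℝ (fun w => crossGram σ (deriv ∘ σ) w i j) z :=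
    differentiableAt_inner_deriv (hσz i) (hσ j)
  rw [mDzbar_congr hmDz, mDzbar_inv_mul hh hdh hz, mDzbar_crossGram_deriv hσz hσ,
    mDzbar_fGram hσz, jetSchurCompl]

theorem hMat_one_apply (σ : Fin n → ℂ → F) (z : ℂ) (i j : Fin n) :
    hMat σ 1 z i j =
      (fromBlocks (fGram σ z) (replicateCol Unit fun k => ⟪σ k z, deriv (σ j) z⟫)
        (replicateRow Unit fun k => ⟪deriv (σ i) z, σ k z⟫)
        (of fun _ _ => ⟪deriv (σ i) z, deriv (σ j) z⟫)).det := by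
  let e : Fin n ⊕ Unit ≃ (Fin 1 × Fin n) ⊕ Unit :=
    Equiv.sumCongr (Equiv.uniqueProd (Fin n) (Fin 1)).symm (Equiv.refl Unit)
  rw [hMat, of_apply, ← det_submatrix_equiv_self e]
  congr 1
  ext (a | a) (b | b) <;> simp [e, fGram, iteratedDeriv_one]

theorem hMat_one (hz : IsUnit (fGram σ z)) :
    hMat σ 1 z = (fGram σ z).det • jetSchurCompl σ z := by
  ext i j
  rw [hMat_one_apply, det_fromBlocks_unit hz, jetSchurCompl, Matrix.mul_assoc]
  rfl

end Frame

theorem stmt9_general {F : Type*} [NormedAddCommGroup F] [InnerProductSpace ℂ F] {n : ℕ}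
    {σ : Fin n → ℂ → F} {z : ℂ} (hσ : ∀ i, ∀ᶠ w in 𝓝 z, DifferentiableAt ℂ (σ i) w)
    (hz : LinearIndependent ℂ fun i => σ i z) :
    mDzbar (fun w => (fGram σ w)⁻¹ * mDz (fGram σ) w) z =
      ((fGram σ z).det)⁻¹ • ((fGram σ z)⁻¹ * hMat σ 1 z) := by
  have hunit : IsUnit (fGram σ z) := isUnit_fGram_iff.mpr hz
  have hdet : (fGram σ z).det ≠ 0 := ((isUnit_iff_isUnit_det _).mp hunit).ne_zero
  rw [mDzbar_inv_fGram_mul_mDz_fGram hσ hunit, hMat_one hunit, Matrix.mul_smul,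
    inv_smul_smul₀ hdet]

/-- Curvature formula: for a `0`-nondegenerate holomorphic frame `σ_1,…,σ_n` with metric `h`,
`∂/∂z̄ (h⁻¹·∂h/∂z)(z) = (det h(z))⁻¹·h(z)⁻¹·h_1(z)` for every `z ∈ Ω`. -/
theorem stmt9 {n : ℕ} (Ω : Set ℂ) (hΩ : IsOpen Ω)
    (σ : Fin n → ℂ → H) (hσ : ∀ i, DifferentiableOn ℂ (σ i) Ω)
    (hnd : ∀ z ∈ Ω, LinearIndependent ℂ fun i => σ i z) :
    ∀ z ∈ Ω,
      mDzbar (fun w => (fGram σ w)⁻¹ * mDz (fGram σ) w) z =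
        ((fGram σ z).det)⁻¹ • ((fGram σ z)⁻¹ * hMat σ 1 z) := by
  intro z hz
  exact stmt9_general (fun i => (hσ i).eventually_differentiableAt (hΩ.mem_nhds hz)) (hnd z hz)
end
end

section
/- Let σ_1,…,σ_n : Ω → H be a k-nondegenerate holomorphic frame, k ≥ 1, with n ≥ 1. Then for every z ∈ Ω, det J_{k−1}h(z) / det J_k h(z) = (det h_k(z))^{−1} · ∏_{m=0}^{k−1} (det h_m(z))^{n·(1−n)^{k−1−m}}, where each det h_m(z) is a positive real number so that the (possibly negative) integer powers are well defined; explicitly, (det J_k h)^{−1}·det J_{k−1}h = (det h_0)^{n(1−n)^{k−1}}·(det h_1)^{n(1−n)^{k−2}} ⋯ (det h_{k−1})^{n}·(det h_k)^{−1}. -/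
open Matrix

noncomputable section

variable {H : Type*} [NormedAddCommGroup H] [InnerProductSpace ℂ H] [CompleteSpace H]

/-- `⟪x, y⟫` is the Mathlib inner product (conjugate-linear in the first argument);
it equals the paper's inner product `⟨y, x⟩`, which is linear in the first argument. -/
local notation "⟪" x ", " y "⟫" => (inner ℂ x y : ℂ)

/-!
Let `D_N` be the determinant of the leading `N × N` block of a matrix of `n × n` blocks, so that
`D_N = det J_{N-1}h` for the jet Gram matrix. Splitting off the last block of the leading
`(m + 1) × (m + 1)` block gives a Schur complement `S` with `D_{m+1} = D_m det S`, and expanding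
each bordered minor in the same way gives `h_m = D_m S`. Hence Sylvester's identity
`det h_m = D_m^{n-1} D_{m+1}`, a multiplicative recurrence for `D` with `D_0 = 1`; unwinding it
produces the exponents `(1-n)^{k-1-m}`.
-/

section BorderedMinors

variable {R l m n : Type*} [CommRing R] [Fintype m] [DecidableEq m]

/-- The matrix of bordered minors of a block matrix `X`: its `(i, j)` entry is the determinant of
the upper left block of `X` bordered by row `i` and column `j` of the remaining blocks. -/
def borderedMinors (X : Matrix (m ⊕ l) (m ⊕ n) R) : Matrix l n R :=
  Matrix.of fun i j =>
    (X.submatrix (Sum.map id fun _ : Unit => i) (Sum.map id fun _ : Unit => j)).det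

lemma borderedMinors_eq_det_smul_schur (X : Matrix (m ⊕ l) (m ⊕ n) R) [Invertible X.toBlocks₁₁] :
    borderedMinors X =
      X.toBlocks₁₁.det • (X.toBlocks₂₂ - X.toBlocks₂₁ * ⅟X.toBlocks₁₁ * X.toBlocks₁₂) := by
  ext i j
  have hblocks : X.submatrix (Sum.map id fun _ : Unit => i) (Sum.map id fun _ : Unit => j) =
      Matrix.fromBlocks X.toBlocks₁₁ (X.toBlocks₁₂.submatrix id fun _ => j)
        (X.toBlocks₂₁.submatrix (fun _ => i) id)
        (X.toBlocks₂₂.submatrix (fun _ => i) fun _ => j) :=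
    (Matrix.fromBlocks_toBlocks _).symm
  rw [borderedMinors, Matrix.of_apply, hblocks, Matrix.det_fromBlocks₁₁,
    Matrix.det_unique (n := Unit)]
  rfl

theorem det_toBlocks₁₁_mul_det_borderedMinors [Fintype n] [DecidableEq n]
    (X : Matrix (m ⊕ n) (m ⊕ n) R) (hX : IsUnit X.toBlocks₁₁.det) :
    X.toBlocks₁₁.det * (borderedMinors X).det =
      X.toBlocks₁₁.det ^ Fintype.card n * X.det := by
  let := X.toBlocks₁₁.invertibleOfIsUnitDet hX
  have hdet : X.det = X.toBlocks₁₁.det *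
      (X.toBlocks₂₂ - X.toBlocks₂₁ * ⅟X.toBlocks₁₁ * X.toBlocks₁₂).det := by
    conv_lhs => rw [← Matrix.fromBlocks_toBlocks X, Matrix.det_fromBlocks₁₁]
  rw [borderedMinors_eq_det_smul_schur, Matrix.det_smul, hdet]
  ring

end BorderedMinors

lemma eq_prod_zpow_pow_of_succ_eq {G : Type*} [DivisionCommMonoid G] (e : ℤ) {D d : ℕ → G} (k : ℕ)
    (h0 : D 0 = 1) (hD : ∀ m < k, D (m + 1) = D m ^ e * d m) :
    D k = ∏ m ∈ Finset.range k, d m ^ e ^ (k - 1 - m) := by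
  induction k with
  | zero => simpa using h0
  | succ k ih =>
    have hpow : D k ^ e = ∏ m ∈ Finset.range k, d m ^ e ^ (k - m) := by
      rw [ih fun m hm => hD m (by lia), ← Finset.prod_zpow]
      refine Finset.prod_congr rfl fun m hm => ?_
      have hm := Finset.mem_range.mp hm
      rw [← _root_.zpow_mul, ← pow_succ, show k - 1 - m + 1 = k - m by lia]
    rw [hD k k.lt_succ_self, hpow, Finset.prod_range_succ]
    simp

section LeadingBlock

variable {R K ι : Type*}

/-- The leading `N × N` block of a matrix of `ι × ι` blocks indexed by `ℕ`. -/
def leadingBlock (M : Matrix (ℕ × ι) (ℕ × ι) R) (N : ℕ) : Matrix (Fin N × ι) (Fin N × ι) R :=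
  M.submatrix (Prod.map Fin.val id) (Prod.map Fin.val id)

/-- The leading `(m + 1) × (m + 1)` block of `M`, with the last block row and column split off. -/
def splitLeadingBlock (M : Matrix (ℕ × ι) (ℕ × ι) R) (m : ℕ) :
    Matrix ((Fin m × ι) ⊕ ι) ((Fin m × ι) ⊕ ι) R :=
  M.submatrix (Sum.elim (Prod.map Fin.val id) (Prod.mk m))
    (Sum.elim (Prod.map Fin.val id) (Prod.mk m))

/-- The bijection sending the indices `(m, i)` of the last block to the right summand. -/
def finSuccProdEquivSum (m : ℕ) (ι : Type*) : Fin (m + 1) × ι ≃ (Fin m × ι) ⊕ ι :=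
  (finSuccEquivLast.prodCongr (Equiv.refl ι)).trans (optionProdEquiv.trans (Equiv.sumComm _ _))

lemma toBlocks₁₁_splitLeadingBlock (M : Matrix (ℕ × ι) (ℕ × ι) R) (m : ℕ) :
    (splitLeadingBlock M m).toBlocks₁₁ = leadingBlock M m :=
  rfl

variable [Fintype ι] [DecidableEq ι]

lemma det_splitLeadingBlock [CommRing R] (M : Matrix (ℕ × ι) (ℕ × ι) R) (m : ℕ) :
    (splitLeadingBlock M m).det = (leadingBlock M (m + 1)).det := by
  rw [← Matrix.det_submatrix_equiv_self (finSuccProdEquivSum m ι).symm (leadingBlock M (m + 1))]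
  congr 1
  ext (⟨r, i⟩ | i) (⟨s, j⟩ | j) <;> simp [splitLeadingBlock, leadingBlock, finSuccProdEquivSum]

lemma det_leadingBlock_succ [Field K] (M : Matrix (ℕ × ι) (ℕ × ι) K) (m : ℕ)
    (hM : (leadingBlock M m).det ≠ 0) :
    (leadingBlock M (m + 1)).det =
      (leadingBlock M m).det ^ (1 - (Fintype.card ι : ℤ)) *
        (borderedMinors (splitLeadingBlock M m)).det := by
  have hsylvester := det_toBlocks₁₁_mul_det_borderedMinors (splitLeadingBlock M m) hM.isUnit
  rw [toBlocks₁₁_splitLeadingBlock, det_splitLeadingBlock] at hsylvester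
  rw [zpow_sub₀ hM, zpow_one, zpow_natCast, div_mul_eq_mul_div, hsylvester,
    mul_div_cancel_left₀ _ (pow_ne_zero _ hM)]

lemma det_leadingBlock_eq_prod_zpow [Field K] (M : Matrix (ℕ × ι) (ℕ × ι) K) (k : ℕ)
    (hM : ∀ m < k, (leadingBlock M m).det ≠ 0) :
    (leadingBlock M k).det = ∏ m ∈ Finset.range k,
      (borderedMinors (splitLeadingBlock M m)).det ^
        (1 - (Fintype.card ι : ℤ)) ^ (k - 1 - m) :=
  eq_prod_zpow_pow_of_succ_eq _ (D := fun m => (leadingBlock M m).det) k Matrix.det_isEmpty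
    fun m hm => det_leadingBlock_succ M m (hM m hm)

theorem stmt13_general [Field K] (M : Matrix (ℕ × ι) (ℕ × ι) K) (k : ℕ)
    (hM : ∀ m ≤ k + 1, (leadingBlock M m).det ≠ 0) :
    (leadingBlock M k).det / (leadingBlock M (k + 1)).det =
      ((borderedMinors (splitLeadingBlock M k)).det)⁻¹ *
        ∏ m ∈ Finset.range k, (borderedMinors (splitLeadingBlock M m)).det ^
          ((Fintype.card ι : ℤ) * (1 - (Fintype.card ι : ℤ)) ^ (k - 1 - m)) := by
  have hk := hM k (by lia)
  have hprod : ∏ m ∈ Finset.range k, (borderedMinors (splitLeadingBlock M m)).det ^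
      ((Fintype.card ι : ℤ) * (1 - (Fintype.card ι : ℤ)) ^ (k - 1 - m)) =
        (leadingBlock M k).det ^ (Fintype.card ι : ℤ) := by
    simp_rw [mul_comm (Fintype.card ι : ℤ), _root_.zpow_mul, Finset.prod_zpow]
    rw [← det_leadingBlock_eq_prod_zpow M k fun m hm => hM m (by lia)]
  rw [hprod, det_leadingBlock_succ M k hk, zpow_sub₀ hk, zpow_one]
  field_simp

end LeadingBlock

lemma det_leadingBlock_gram_ne_zero {𝕜 E ι : Type*} [RCLike 𝕜] [NormedAddCommGroup E]
    [InnerProductSpace 𝕜 E] [Fintype ι] [DecidableEq ι] (v : ℕ × ι → E) {N N' : ℕ} (hN : N ≤ N')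
    (hv : LinearIndependent 𝕜 fun p : Fin N' × ι => v (p.1, p.2)) :
    (leadingBlock (Matrix.gram 𝕜 v) N).det ≠ 0 :=
  Matrix.det_gram_ne_zero_iff_linearIndependent.mpr <|
    hv.comp (Prod.map (Fin.castLE hN) id)
      ((Fin.castLE_injective hN).prodMap Function.injective_id)

section Jet

variable {E : Type*} [NormedAddCommGroup E] [InnerProductSpace ℂ E] {n : ℕ}

/-- The infinite jet of the frame `σ` at `z`: the vectors `σ_i^{(r)}(z)`, indexed by `(r, i)`. -/
def jet (σ : Fin n → ℂ → E) (z : ℂ) (p : ℕ × Fin n) : E :=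
  iteratedDeriv p.1 (σ p.2) z

lemma jGram_eq_leadingBlock (σ : Fin n → ℂ → E) (N : ℕ) (z : ℂ) :
    jGram σ N z = leadingBlock (Matrix.gram ℂ (jet σ z)) N :=
  rfl

lemma hMat_eq_borderedMinors (σ : Fin n → ℂ → E) (m : ℕ) (z : ℂ) :
    hMat σ m z = borderedMinors (splitLeadingBlock (Matrix.gram ℂ (jet σ z)) m) := by
  ext i j
  refine congrArg Matrix.det ?_
  ext (a | a) (b | b) <;> rfl

end Jet

/-- `det J_{k−1}h / det J_k h
  = (det h_k)⁻¹ · ∏_{m=0}^{k−1} (det h_m)^{n·(1−n)^{k−1−m}}` on `Ω`. -/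
theorem stmt13 {n : ℕ} (Ω : Set ℂ) (hΩ : IsOpen Ω) (k : ℕ) (hk : 1 ≤ k) (hn : 1 ≤ n)
    (σ : Fin n → ℂ → H) (hσ : ∀ i, DifferentiableOn ℂ (σ i) Ω)
    (hnd : ∀ z ∈ Ω, LinearIndependent ℂ
      fun p : Fin (k + 1) × Fin n => iteratedDeriv (p.1 : ℕ) (σ p.2) z) :
    ∀ z ∈ Ω,
      (jGram σ k z).det / (jGram σ (k + 1) z).det =
        ((hMat σ k z).det)⁻¹ *
          ∏ m ∈ Finset.range k,
            (hMat σ m z).det ^ ((n : ℤ) * (1 - (n : ℤ)) ^ (k - 1 - m)) := by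
  intro z hz
  simpa only [jGram_eq_leadingBlock, hMat_eq_borderedMinors, Fintype.card_fin] using
    stmt13_general (Matrix.gram ℂ (jet σ z)) k
      fun m hm => det_leadingBlock_gram_ne_zero (jet σ z) hm (hnd z hz)
end
end
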